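/- arXiv:2003.02681 — 7 statements merged into one kernel-verified Lean document; each statement's English description precedes it below -/
import Mathlib

section
/- Let β* := N Xᵀ V⁻¹ x. Then (i) X β* = x; (ii) the i-th entry of β* is 0 whenever N_ii = 0; and (iii) for every β ∈ ℝ^m with X β = x and with β_i = 0 whenever N_ii = 0, one has β*ᵀ N⁺ β* ≤ βᵀ N⁺ β, with equality if and only if β = β*. (Optimality of the LinUCB-d coefficient vector, Proposition 1.) -/
open Matrix

/-!
Every vector in the column space of `N` is `N γ` for some `γ`, and there the objective
`(N γ)ᴴ N⁺ (N γ)` equals `γᴴ N γ`. The claimed minimiser corresponds to `γ₀ = Xᴴ V⁻¹ x`, where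
`V = X N Xᴴ`. If `X N γ = x`, then `N (γ - γ₀)` lies in the kernel of `X`, so `γ₀` and `γ - γ₀` are
orthogonal for the form `N`, and Pythagoras gives
`γᴴ N γ = γ₀ᴴ N γ₀ + (γ - γ₀)ᴴ N (γ - γ₀)`. The last term is nonnegative and vanishes only if
`N γ = N γ₀`.
-/

section QuadraticForm

variable {m n R : Type*} [Fintype m] [Fintype n] [Ring R] [StarRing R]
  {X : Matrix m n R} {N P : Matrix n n R}

theorem star_mulVec_dotProduct_mulVec_of_mul_mul_eq (hN : N.IsHermitian)
    (hP : N * P * N = N) (γ : n → R) :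
    star (N *ᵥ γ) ⬝ᵥ P *ᵥ (N *ᵥ γ) = star γ ⬝ᵥ N *ᵥ γ := by
  rw [star_mulVec, hN.eq, ← dotProduct_mulVec, mulVec_mulVec, mulVec_mulVec, hP]

theorem star_dotProduct_mulVec_add_of_orthogonal (hN : N.IsHermitian) {γ δ : n → R}
    (h : star γ ⬝ᵥ N *ᵥ δ = 0) :
    star (γ + δ) ⬝ᵥ N *ᵥ (γ + δ) = star γ ⬝ᵥ N *ᵥ γ + star δ ⬝ᵥ N *ᵥ δ := by
  have h_symm : star δ ⬝ᵥ N *ᵥ γ = 0 := by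
    rw [star_dotProduct, star_mulVec, hN.eq, ← dotProduct_mulVec, h, star_zero]
  simp only [star_add, mulVec_add, add_dotProduct, dotProduct_add, h, h_symm, add_zero, zero_add]

theorem star_conjTranspose_mulVec_dotProduct_mulVec (u : m → R) (δ : n → R) :
    star (Xᴴ *ᵥ u) ⬝ᵥ N *ᵥ δ = star u ⬝ᵥ X *ᵥ (N *ᵥ δ) := by
  rw [star_mulVec, conjTranspose_conjTranspose, ← dotProduct_mulVec]

theorem star_dotProduct_mulVec_eq_add_of_mulVec_eq (hN : N.IsHermitian) {u : m → R} {γ : n → R}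
    (h : X *ᵥ (N *ᵥ γ) = X *ᵥ (N *ᵥ (Xᴴ *ᵥ u))) :
    star γ ⬝ᵥ N *ᵥ γ =
      star (Xᴴ *ᵥ u) ⬝ᵥ N *ᵥ (Xᴴ *ᵥ u) + star (γ - Xᴴ *ᵥ u) ⬝ᵥ N *ᵥ (γ - Xᴴ *ᵥ u) := by
  have orthogonal : star (Xᴴ *ᵥ u) ⬝ᵥ N *ᵥ (γ - Xᴴ *ᵥ u) = 0 := by
    rw [star_conjTranspose_mulVec_dotProduct_mulVec, mulVec_sub, mulVec_sub, h, sub_self,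
      dotProduct_zero]
  simpa only [add_sub_cancel] using star_dotProduct_mulVec_add_of_orthogonal hN orthogonal

end QuadraticForm

section MinNormSolution

variable {m n R : Type*} [Fintype m] [DecidableEq m] [Fintype n] [CommRing R] [StarRing R]

/-- The vector `N Xᴴ (X N Xᴴ)⁻¹ x`, the solution `β` of `X β = x` in the column space of `N` that
minimises `βᴴ N⁺ β`. It is meaningful only for invertible `X N Xᴴ`, since the matrix inverse is
otherwise `0`. -/
noncomputable def minNormSolution (X : Matrix m n R) (N : Matrix n n R) (x : m → R) : n → R :=
  (N * Xᴴ * (X * N * Xᴴ)⁻¹) *ᵥ x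

theorem minNormSolution_eq_mulVec (X : Matrix m n R) (N : Matrix n n R) (x : m → R) :
    minNormSolution X N x = N *ᵥ (Xᴴ *ᵥ ((X * N * Xᴴ)⁻¹ *ᵥ x)) := by
  simp only [minNormSolution, mulVec_mulVec, Matrix.mul_assoc]

theorem mulVec_minNormSolution {X : Matrix m n R} {N : Matrix n n R}
    (hV : IsUnit (X * N * Xᴴ)) (x : m → R) : X *ᵥ minNormSolution X N x = x := by
  rw [minNormSolution, mulVec_mulVec, ← Matrix.mul_assoc, ← Matrix.mul_assoc,
    mul_nonsing_inv _ ((isUnit_iff_isUnit_det _).mp hV), one_mulVec]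

end MinNormSolution

section Diagonal

variable {n K : Type*} [Fintype n] [DecidableEq n] [DivisionRing K]

theorem mem_range_mulVec_diagonal_iff {w β : n → K} :
    β ∈ Set.range (diagonal w).mulVec ↔ ∀ i, w i = 0 → β i = 0 := by
  constructor
  · rintro ⟨γ, rfl⟩ i hi
    rw [mulVec_diagonal, hi, zero_mul]
  · intro h
    refine ⟨fun i => (w i)⁻¹ * β i, funext fun i => ?_⟩
    rw [mulVec_diagonal]
    by_cases hi : w i = 0
    · rw [hi, zero_mul, h i hi]
    · rw [mul_inv_cancel_left₀ hi]

theorem diagonal_mul_diagonal_ite_inv_mul_diagonal [LinearOrder K] {w : n → K}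
    (hw : ∀ i, 0 ≤ w i) :
    diagonal w * diagonal (fun i => if 0 < w i then (w i)⁻¹ else 0) * diagonal w = diagonal w := by
  rw [diagonal_mul_diagonal, diagonal_mul_diagonal]
  congr 1 with i
  rcases (hw i).eq_or_lt with hi | hi
  · rw [← hi, mul_zero]
  · rw [if_pos hi, mul_inv_cancel₀ hi.ne', one_mul]

end Diagonal

open scoped ComplexOrder in
/-- Membership in the column space of `N` plays the role of `βᵢ = 0` whenever `Nᵢᵢ = 0`, and `P`, a
generalized inverse of `N`, that of `N⁺`. -/
theorem stmt_0_general {m n 𝕜 : Type*} [Fintype m] [DecidableEq m] [Fintype n] [RCLike 𝕜]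
    {X : Matrix m n 𝕜} {N P : Matrix n n 𝕜} (hN : N.PosSemidef) (hP : N * P * N = N)
    (hV : IsUnit (X * N * Xᴴ)) (x : m → 𝕜) :
    X *ᵥ minNormSolution X N x = x ∧
    minNormSolution X N x ∈ Set.range N.mulVec ∧
    ∀ β, X *ᵥ β = x → β ∈ Set.range N.mulVec →
      star (minNormSolution X N x) ⬝ᵥ P *ᵥ minNormSolution X N x ≤ star β ⬝ᵥ P *ᵥ β ∧
      (star (minNormSolution X N x) ⬝ᵥ P *ᵥ minNormSolution X N x = star β ⬝ᵥ P *ᵥ β ↔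
        β = minNormSolution X N x) := by
  have feasible := mulVec_minNormSolution hV x
  rw [minNormSolution_eq_mulVec] at feasible ⊢
  refine ⟨feasible, Set.mem_range_self _, ?_⟩
  rintro _ hβ ⟨γ, rfl⟩
  rw [star_mulVec_dotProduct_mulVec_of_mul_mul_eq hN.isHermitian hP,
    star_mulVec_dotProduct_mulVec_of_mul_mul_eq hN.isHermitian hP,
    star_dotProduct_mulVec_eq_add_of_mulVec_eq hN.isHermitian (hβ.trans feasible.symm)]
  refine ⟨le_add_of_nonneg_right (hN.dotProduct_mulVec_nonneg _), ?_⟩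
  rw [left_eq_add, hN.dotProduct_mulVec_zero_iff, mulVec_sub, sub_eq_zero]

/-- Optimality of the LinUCB-d coefficient vector (Proposition 1).
`X` is a real `d × m` matrix, `N` a diagonal matrix (given by its diagonal entries
`N : Fin m → ℝ`, all nonnegative) such that `V := X N Xᵀ` is positive definite, and
`N⁺` is the diagonal pseudo-inverse of `N`.  With `β* := N Xᵀ V⁻¹ x`:
(i) `X β* = x`; (ii) `β*ᵢ = 0` whenever `Nᵢᵢ = 0`; (iii) `β*` minimizes `βᵀ N⁺ β`
over all `β` with `X β = x` and `βᵢ = 0` whenever `Nᵢᵢ = 0`, with equality iff `β = β*`. -/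
theorem stmt_0 (d m : ℕ) (X : Matrix (Fin d) (Fin m) ℝ) (N : Fin m → ℝ)
    (hN : ∀ i, 0 ≤ N i)
    (hV : (X * Matrix.diagonal N * Xᵀ).PosDef) (x : Fin d → ℝ) :
    let V : Matrix (Fin d) (Fin d) ℝ := X * Matrix.diagonal N * Xᵀ
    let Npinv : Matrix (Fin m) (Fin m) ℝ :=
      Matrix.diagonal (fun i => if 0 < N i then (N i)⁻¹ else 0)
    let βstar : Fin m → ℝ := (Matrix.diagonal N * Xᵀ * V⁻¹) *ᵥ x
    (X *ᵥ βstar = x) ∧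
    (∀ i, N i = 0 → βstar i = 0) ∧
    (∀ β : Fin m → ℝ, X *ᵥ β = x → (∀ i, N i = 0 → β i = 0) →
      βstar ⬝ᵥ (Npinv *ᵥ βstar) ≤ β ⬝ᵥ (Npinv *ᵥ β) ∧
      (βstar ⬝ᵥ (Npinv *ᵥ βstar) = β ⬝ᵥ (Npinv *ᵥ β) ↔ β = βstar)) := by
  have h := stmt_0_general (PosSemidef.diagonal hN)
    (diagonal_mul_diagonal_ite_inv_mul_diagonal hN) hV.isUnit x
  simpa only [minNormSolution, conjTranspose_eq_transpose_of_trivial,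
    mem_range_mulVec_diagonal_iff, star_trivial] using h
end

section
/- Let β* := N Xᵀ V⁻¹ x. Then β*ᵀ N⁺ β* = xᵀ V⁻¹ x; that is, the estimation-uncertainty quantity σ̂² computed by LinUCB-d equals the LinUCB quantity ‖x‖²_{V⁻¹}. -/
open Matrix

theorem ite_pos_inv_of_nonneg {K : Type*} [GroupWithZero K] [PartialOrder K]
    [DecidableLT K] {a : K} (ha : 0 ≤ a) : (if 0 < a then a⁻¹ else 0) = a⁻¹ := by
  rcases ha.eq_or_lt with rfl | hpos
  · simp
  · exact if_pos hpos

theorem diagonal_mul_diagonal_inv_mul_diagonal {ι K : Type*} [Fintype ι] [DecidableEq ι]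
    [DivisionSemiring K] (w : ι → K) :
    diagonal w * diagonal (fun i => (w i)⁻¹) * diagonal w = diagonal w := by
  simp only [diagonal_mul_diagonal, mul_inv_mul_cancel]

theorem mulVec_dotProduct_mulVec_mulVec {n p R : Type*} [Fintype n] [Fintype p]
    [CommSemiring R] (B : Matrix p n R) (G : Matrix p p R) (x : n → R) :
    (B *ᵥ x) ⬝ᵥ (G *ᵥ (B *ᵥ x)) = x ⬝ᵥ ((Bᵀ * G * B) *ᵥ x) := by
  rw [← vecMul_transpose, ← dotProduct_mulVec, mulVec_mulVec, vecMul_transpose, mulVec_mulVec]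

section WeightedLeastSquares

variable {n p R : Type*} [Fintype n] [DecidableEq n] [Fintype p] [CommRing R]
  {X : Matrix n p R} {N G : Matrix p p R}

theorem transpose_mul_mul_eq_inv_transpose (hG : Nᵀ * G * N = N) (hV : IsUnit (X * N * Xᵀ)) :
    (N * Xᵀ * (X * N * Xᵀ)⁻¹)ᵀ * G * (N * Xᵀ * (X * N * Xᵀ)⁻¹) = (X * N * Xᵀ)⁻¹ᵀ := by
  set V := X * N * Xᵀ with V_def
  have hdet : IsUnit V.det := (isUnit_iff_isUnit_det V).mp hV
  calc (N * Xᵀ * V⁻¹)ᵀ * G * (N * Xᵀ * V⁻¹)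
      = V⁻¹ᵀ * (X * (Nᵀ * G * N) * Xᵀ) * V⁻¹ := by
        simp only [transpose_mul, transpose_transpose, Matrix.mul_assoc]
    _ = V⁻¹ᵀ * V * V⁻¹ := by rw [hG, V_def]
    _ = V⁻¹ᵀ := mul_nonsing_inv_cancel_right V _ hdet

/-- For symmetric `N`, the condition `Nᵀ * G * N = N` says that `G` is a generalized inverse
of `N`, as `N⁺` is. -/
theorem stmt_1_general (hG : Nᵀ * G * N = N) (hV : IsUnit (X * N * Xᵀ)) (x : n → R) :
    ((N * Xᵀ * (X * N * Xᵀ)⁻¹) *ᵥ x) ⬝ᵥ (G *ᵥ ((N * Xᵀ * (X * N * Xᵀ)⁻¹) *ᵥ x)) =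
      x ⬝ᵥ ((X * N * Xᵀ)⁻¹ *ᵥ x) := by
  rw [mulVec_dotProduct_mulVec_mulVec, transpose_mul_mul_eq_inv_transpose hG hV,
    mulVec_transpose, dotProduct_comm, ← dotProduct_mulVec]

end WeightedLeastSquares

/-- The LinUCB-d uncertainty `σ̂² = β*ᵀ N⁺ β*` equals the LinUCB quantity `‖x‖²_{V⁻¹}`,
where `β* := N Xᵀ V⁻¹ x`, `V := X N Xᵀ` is positive definite and `N⁺` is the diagonal
pseudo-inverse of the nonnegative diagonal matrix `N`. -/
theorem stmt_1 (d m : ℕ) (X : Matrix (Fin d) (Fin m) ℝ) (N : Fin m → ℝ)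
    (hN : ∀ i, 0 ≤ N i)
    (hV : (X * Matrix.diagonal N * Xᵀ).PosDef) (x : Fin d → ℝ) :
    let V : Matrix (Fin d) (Fin d) ℝ := X * Matrix.diagonal N * Xᵀ
    let Npinv : Matrix (Fin m) (Fin m) ℝ :=
      Matrix.diagonal (fun i => if 0 < N i then (N i)⁻¹ else 0)
    let βstar : Fin m → ℝ := (Matrix.diagonal N * Xᵀ * V⁻¹) *ᵥ x
    βstar ⬝ᵥ (Npinv *ᵥ βstar) = x ⬝ᵥ (V⁻¹ *ᵥ x) := by
  simp only [fun i => ite_pos_inv_of_nonneg (hN i)]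
  exact stmt_1_general
    (by rw [diagonal_transpose, diagonal_mul_diagonal_inv_mul_diagonal]) hV.isUnit x
end

section
/- Let β* := N Xᵀ V⁻¹ x, and let s ∈ ℝ^m satisfy s_i = 0 whenever N_ii = 0. Then sᵀ N⁺ β* = (X s)ᵀ V⁻¹ x; that is, the LinUCB-d reward estimate r̂ = sᵀ N⁺ β* equals θ̂ᵀ x with θ̂ := V⁻¹ X s, the LinUCB (ridge-regression) estimate. -/
open Matrix

theorem ite_pos_inv_eq_inv {G : Type*} [GroupWithZero G] [PartialOrder G] {a : G}
    [Decidable (0 < a)] (ha : 0 ≤ a) : (if 0 < a then a⁻¹ else 0) = a⁻¹ := by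
  rcases ha.eq_or_lt with rfl | hpos
  · simp
  · exact if_pos hpos

theorem vecMul_diagonal_inv_mul_diagonal {K n : Type*} [DivisionSemiring K] [Fintype n]
    [DecidableEq n] {w s : n → K} (hs : ∀ i, w i = 0 → s i = 0) :
    s ᵥ* (diagonal w⁻¹ * diagonal w) = s := by
  ext i
  rw [diagonal_mul_diagonal, vecMul_diagonal, Pi.inv_apply]
  by_cases hw : w i = 0
  · rw [hs i hw, zero_mul]
  · rw [inv_mul_cancel₀ hw, mul_one]

/-- `A` takes the place of `V⁻¹`; since `0⁻¹ = 0`, the matrix `diagonal N⁻¹` is `N⁺`. -/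
theorem stmt_2_general {K ι κ l : Type*} [Semifield K] [Fintype ι] [Fintype κ] [DecidableEq κ]
    [Fintype l] (X : Matrix ι κ K) (N : κ → K) (A : Matrix ι l K) (x : l → K) (s : κ → K)
    (hs : ∀ i, N i = 0 → s i = 0) :
    s ⬝ᵥ (diagonal N⁻¹ *ᵥ ((diagonal N * Xᵀ * A) *ᵥ x)) = (X *ᵥ s) ⬝ᵥ (A *ᵥ x) :=
  calc s ⬝ᵥ (diagonal N⁻¹ *ᵥ ((diagonal N * Xᵀ * A) *ᵥ x))
    _ = (s ᵥ* (diagonal N⁻¹ * diagonal N)) ⬝ᵥ (Xᵀ *ᵥ (A *ᵥ x)) := by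
      simp only [← dotProduct_mulVec, mulVec_mulVec, Matrix.mul_assoc]
    _ = s ⬝ᵥ (Xᵀ *ᵥ (A *ᵥ x)) := by rw [vecMul_diagonal_inv_mul_diagonal hs]
    _ = (X *ᵥ s) ⬝ᵥ (A *ᵥ x) := by rw [dotProduct_mulVec, vecMul_transpose]

/-- The LinUCB-d reward estimate `r̂ = sᵀ N⁺ β*` (with `β* := N Xᵀ V⁻¹ x`) equals
`θ̂ᵀ x` with `θ̂ := V⁻¹ X s`, the LinUCB ridge-regression estimate, whenever
`sᵢ = 0` for every `i` with `Nᵢᵢ = 0`.  Here `V := X N Xᵀ` is positive definite and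
`N⁺` is the diagonal pseudo-inverse of the nonnegative diagonal matrix `N`. -/
theorem stmt_2 (d m : ℕ) (X : Matrix (Fin d) (Fin m) ℝ) (N : Fin m → ℝ)
    (hN : ∀ i, 0 ≤ N i)
    (hV : (X * Matrix.diagonal N * Xᵀ).PosDef) (x : Fin d → ℝ)
    (s : Fin m → ℝ) (hs : ∀ i, N i = 0 → s i = 0) :
    let V : Matrix (Fin d) (Fin d) ℝ := X * Matrix.diagonal N * Xᵀ
    let Npinv : Matrix (Fin m) (Fin m) ℝ :=
      Matrix.diagonal (fun i => if 0 < N i then (N i)⁻¹ else 0)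
    let βstar : Fin m → ℝ := (Matrix.diagonal N * Xᵀ * V⁻¹) *ᵥ x
    s ⬝ᵥ (Npinv *ᵥ βstar) = (X *ᵥ s) ⬝ᵥ (V⁻¹ *ᵥ x) := by
  simp only [ite_pos_inv_eq_inv (hN _)]
  exact stmt_2_general X N _ x s hs
end

section
/- Let V₀ be a positive definite d×d real matrix and let x₁, …, x_n ∈ ℝ^d satisfy ‖x_t‖₂ ≤ l for all t, where l > 0. Define V_t := V_{t−1} + x_t x_tᵀ for t = 1, …, n. Then Σ_{t=1}^n min(1, x_tᵀ V_{t−1}⁻¹ x_t) ≤ 2 log(det V_n / det V₀) ≤ 2 d log( (trace V₀ + n l²) / (d · (det V₀)^{1/d}) ). (Elliptical potential lemma.) -/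
open Matrix Finset Real

/-!
By the matrix determinant lemma each rank-one update multiplies the determinant by
`1 + x_tᵀ V_{t-1}⁻¹ x_t`, so `log (det V_n / det V₀)` telescopes to
`∑ log (1 + x_tᵀ V_{t-1}⁻¹ x_t)`, and the first bound follows from `min 1 u ≤ 2 log (1 + u)`.
The second bound is AM-GM for the eigenvalues of `V_n`, because the trace of `V_t` grows by
`‖x_t‖²` at each step.
-/

lemma min_one_le_two_mul_log_one_add {u : ℝ} (hu : 0 ≤ u) : min 1 u ≤ 2 * log (1 + u) := by
  have min_le : min 1 u ≤ 2 * (2 * u / (u + 2)) := by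
    rw [← mul_div_assoc, le_div_iff₀ (by positivity)]
    rcases le_total 1 u with h | h
    · rw [min_eq_left h]
      linarith
    · rw [min_eq_right h]
      nlinarith
  linarith [le_log_one_add_of_nonneg hu]

section Determinant

variable {ι R : Type*} [Fintype ι] [DecidableEq ι]

lemma det_add_vecMulVec [CommRing R] {A : Matrix ι ι R} (hA : IsUnit A.det) (u v : ι → R) :
    (A + vecMulVec u v).det = A.det * (1 + v ⬝ᵥ (A⁻¹ *ᵥ u)) := by
  rw [vecMulVec_eq Unit, det_add_replicateCol_mul_replicateRow hA, Matrix.mul_assoc,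
    det_unique (1 + _)]
  rfl

lemma dotProduct_inv_mulVec_nonneg {A : Matrix ι ι ℝ} (hA : A.PosSemidef) (v : ι → ℝ) :
    0 ≤ v ⬝ᵥ (A⁻¹ *ᵥ v) :=
  hA.inv.dotProduct_mulVec_nonneg v

lemma det_le_trace_div_card_pow {A : Matrix ι ι ℝ} (hA : A.PosSemidef) :
    A.det ≤ (A.trace / Fintype.card ι) ^ Fintype.card ι := by
  cases isEmpty_or_nonempty ι
  · simp
  have am_gm := geom_mean_le_arith_mean univ (fun _ => (1 : ℝ)) hA.isHermitian.eigenvalues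
    (by simp) (by simp [Fintype.card_pos]) fun i _ => hA.eigenvalues_nonneg i
  have root_det_le : A.det ^ (Fintype.card ι : ℝ)⁻¹ ≤ A.trace / Fintype.card ι := by
    simpa [hA.isHermitian.det_eq_prod_eigenvalues, hA.isHermitian.trace_eq_sum_eigenvalues]
      using am_gm
  calc A.det = (A.det ^ (Fintype.card ι : ℝ)⁻¹) ^ Fintype.card ι :=
        (rpow_inv_natCast_pow hA.det_nonneg Fintype.card_ne_zero).symm
    _ ≤ (A.trace / Fintype.card ι) ^ Fintype.card ι := by
        gcongr
        exact rpow_nonneg hA.det_nonneg _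

lemma det_div_det_le_pow_of_trace_le {A B : Matrix ι ι ℝ} {T : ℝ} (hA : A.PosSemidef)
    (hB : 0 < B.det) (hT : A.trace ≤ T) :
    A.det / B.det ≤
      (T / (Fintype.card ι * B.det ^ (1 / Fintype.card ι : ℝ))) ^ Fintype.card ι := by
  cases isEmpty_or_nonempty ι
  · simp
  have root_pow : (B.det ^ (1 / Fintype.card ι : ℝ)) ^ Fintype.card ι = B.det := by
    rw [one_div, rpow_inv_natCast_pow hB.le Fintype.card_ne_zero]
  have trace_nonneg : 0 ≤ A.trace := hA.trace_nonneg
  calc A.det / B.det ≤ (A.trace / Fintype.card ι) ^ Fintype.card ι / B.det := by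
        gcongr
        exact det_le_trace_div_card_pow hA
    _ ≤ (T / Fintype.card ι) ^ Fintype.card ι / B.det := by gcongr
    _ = (T / (Fintype.card ι * B.det ^ (1 / Fintype.card ι : ℝ))) ^ Fintype.card ι := by
        rw [← div_div, div_pow _ (B.det ^ _), root_pow]

end Determinant

section DesignMatrix

variable {ι R : Type*}

/-- The regularized design matrix `V_t = V₀ + x₁ x₁ᵀ + ⋯ + x_t x_tᵀ` of linear regression. The
vectors are indexed from `1`, so `x 0` is ignored. -/
def designMatrix [NonUnitalNonAssocSemiring R] (V₀ : Matrix ι ι R) (x : ℕ → ι → R) (t : ℕ) :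
    Matrix ι ι R :=
  V₀ + ∑ τ ∈ Icc 1 t, vecMulVec (x τ) (x τ)

@[simp]
lemma designMatrix_zero [NonUnitalNonAssocSemiring R] (V₀ : Matrix ι ι R) (x : ℕ → ι → R) :
    designMatrix V₀ x 0 = V₀ := by
  simp [designMatrix]

lemma designMatrix_succ [NonUnitalNonAssocSemiring R] (V₀ : Matrix ι ι R) (x : ℕ → ι → R)
    (t : ℕ) :
    designMatrix V₀ x (t + 1) = designMatrix V₀ x t + vecMulVec (x (t + 1)) (x (t + 1)) := by
  rw [designMatrix, sum_Icc_succ_top (by lia), ← add_assoc, designMatrix]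

lemma posDef_designMatrix [Finite ι] {V₀ : Matrix ι ι ℝ} (hV₀ : V₀.PosDef) (x : ℕ → ι → ℝ)
    (t : ℕ) :
    (designMatrix V₀ x t).PosDef :=
  hV₀.add_posSemidef <| posSemidef_sum _ fun τ _ => by
    simpa using posSemidef_vecMulVec_self_star (x τ)

variable [Fintype ι]

lemma trace_designMatrix [NonUnitalNonAssocSemiring R] (V₀ : Matrix ι ι R) (x : ℕ → ι → R)
    (t : ℕ) :
    (designMatrix V₀ x t).trace = V₀.trace + ∑ τ ∈ Icc 1 t, x τ ⬝ᵥ x τ := by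
  simp [designMatrix, trace_sum]

lemma trace_designMatrix_le {V₀ : Matrix ι ι ℝ} {x : ℕ → ι → ℝ} {t : ℕ} {c : ℝ}
    (hx : ∀ τ ∈ Icc 1 t, x τ ⬝ᵥ x τ ≤ c) :
    (designMatrix V₀ x t).trace ≤ V₀.trace + t * c := by
  rw [trace_designMatrix]
  gcongr
  simpa using sum_le_card_nsmul _ _ c hx

variable [DecidableEq ι]

lemma det_designMatrix [CommRing R] {V₀ : Matrix ι ι R} {x : ℕ → ι → R} {n : ℕ}
    (hV : ∀ t < n, IsUnit (designMatrix V₀ x t).det) :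
    (designMatrix V₀ x n).det =
      V₀.det * ∏ t ∈ Icc 1 n, (1 + x t ⬝ᵥ ((designMatrix V₀ x (t - 1))⁻¹ *ᵥ x t)) := by
  induction n with
  | zero => simp
  | succ n ih =>
    rw [designMatrix_succ, det_add_vecMulVec (hV n n.lt_succ_self),
      ih fun t ht => hV t (ht.trans n.lt_succ_self), prod_Icc_succ_top (by lia),
      Nat.add_sub_cancel, mul_assoc]

lemma log_det_designMatrix_div_det {V₀ : Matrix ι ι ℝ} (hV₀ : V₀.PosDef) (x : ℕ → ι → ℝ)
    (n : ℕ) :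
    log ((designMatrix V₀ x n).det / V₀.det) =
      ∑ t ∈ Icc 1 n, log (1 + x t ⬝ᵥ ((designMatrix V₀ x (t - 1))⁻¹ *ᵥ x t)) := by
  have hV := posDef_designMatrix hV₀ x
  rw [det_designMatrix fun t _ => (hV t).det_pos.ne'.isUnit,
    mul_div_cancel_left₀ _ hV₀.det_pos.ne', log_prod]
  intro t _
  linarith [dotProduct_inv_mulVec_nonneg (hV (t - 1)).posSemidef (x t)]

lemma sum_min_one_le_two_mul_log_det_div_det {V₀ : Matrix ι ι ℝ} (hV₀ : V₀.PosDef)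
    (x : ℕ → ι → ℝ) (n : ℕ) :
    ∑ t ∈ Icc 1 n, min 1 (x t ⬝ᵥ ((designMatrix V₀ x (t - 1))⁻¹ *ᵥ x t)) ≤
      2 * log ((designMatrix V₀ x n).det / V₀.det) := by
  rw [log_det_designMatrix_div_det hV₀, mul_sum]
  exact sum_le_sum fun t _ =>
    min_one_le_two_mul_log_one_add <|
      dotProduct_inv_mulVec_nonneg (posDef_designMatrix hV₀ x (t - 1)).posSemidef (x t)

lemma log_det_designMatrix_div_det_le {V₀ : Matrix ι ι ℝ} (hV₀ : V₀.PosDef) {x : ℕ → ι → ℝ}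
    {n : ℕ} {c : ℝ} (hx : ∀ t ∈ Icc 1 n, x t ⬝ᵥ x t ≤ c) :
    log ((designMatrix V₀ x n).det / V₀.det) ≤
      Fintype.card ι *
        log ((V₀.trace + n * c) / (Fintype.card ι * V₀.det ^ (1 / Fintype.card ι : ℝ))) := by
  have hV := posDef_designMatrix hV₀ x n
  rw [← log_pow]
  exact log_le_log (div_pos hV.det_pos hV₀.det_pos)
    (det_div_det_le_pow_of_trace_le hV.posSemidef hV₀.det_pos (trace_designMatrix_le hx))

end DesignMatrix

/-- Elliptical potential lemma: with `V₀` positive definite, `‖x_t‖₂ ≤ l` and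
`V_t := V_{t−1} + x_t x_tᵀ`,
`Σ_{t=1}^n min(1, x_tᵀ V_{t−1}⁻¹ x_t) ≤ 2 log(det V_n / det V₀)
  ≤ 2 d log( (tr V₀ + n l²) / (d (det V₀)^{1/d}) )`. -/
theorem stmt_6 (d n : ℕ) (V₀ : Matrix (Fin d) (Fin d) ℝ) (hV₀ : V₀.PosDef)
    (x : ℕ → Fin d → ℝ) (l : ℝ) (hl : 0 < l)
    (hx : ∀ t ∈ Finset.Icc 1 n, Real.sqrt (∑ i, x t i ^ 2) ≤ l) :
    let V : ℕ → Matrix (Fin d) (Fin d) ℝ :=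
      fun t => V₀ + ∑ τ ∈ Finset.Icc 1 t, Matrix.vecMulVec (x τ) (x τ)
    (∑ t ∈ Finset.Icc 1 n, min 1 (x t ⬝ᵥ ((V (t - 1))⁻¹ *ᵥ x t))
        ≤ 2 * Real.log ((V n).det / V₀.det)) ∧
    (2 * Real.log ((V n).det / V₀.det)
        ≤ 2 * d * Real.log ((V₀.trace + n * l ^ 2) / (d * V₀.det ^ ((1 : ℝ) / d)))) := by
  intro V
  have sq_norm_le : ∀ t ∈ Icc 1 n, x t ⬝ᵥ x t ≤ l ^ 2 := fun t ht => by
    simpa only [dotProduct, sq] using (sqrt_le_left hl.le).1 (hx t ht)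
  refine ⟨sum_min_one_le_two_mul_log_det_div_det hV₀ x n, ?_⟩
  rw [mul_assoc]
  gcongr
  have log_det_le := log_det_designMatrix_div_det_le hV₀ sq_norm_le
  rwa [Fintype.card_fin] at log_det_le
end

section
/- Let l > 0, let x₁, …, x_m ∈ ℝ^d satisfy ‖x_c‖₂ ≤ l for all c, and let N₁, …, N_m ≥ 0 be real weights with Σ_c N_c ≤ t for some real t ≥ 0. Set V := l² I + Σ_{c=1}^m N_c x_c x_cᵀ. Then every eigenvalue of V is at most (t+1) l², hence det V ≤ ((t+1) l²)^d and log( det V / l^{2d} ) ≤ d log(1 + t). -/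
open Matrix Finset Real

/-!
In the Loewner order, Cauchy–Schwarz says `x xᴴ ≤ ‖x‖² I`. Summing with the weights `N_c`
gives `V ≤ (l² + t l²) I`, and such a bound controls every eigenvalue of `V`. As `V` is positive
definite and its determinant is the product of its `d` eigenvalues, the two remaining bounds follow.
-/

section Loewner

open scoped ComplexOrder MatrixOrder

variable {𝕜 n : Type*} [RCLike 𝕜]

section ScalarBound

variable [Fintype n]

theorem star_dotProduct_vecMulVec_self_star_mulVec (x v : n → 𝕜) :
    star v ⬝ᵥ (vecMulVec x (star x) *ᵥ v) =
      ((‖inner 𝕜 (WithLp.toLp 2 x) (WithLp.toLp 2 v)‖ ^ 2 : ℝ) : 𝕜) := by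
  rw [vecMulVec_mulVec, op_smul_eq_smul, dotProduct_smul, smul_eq_mul, mul_comm,
    dotProduct_comm (star v), dotProduct_comm (star x), ← EuclideanSpace.inner_toLp_toLp,
    ← EuclideanSpace.inner_toLp_toLp, ← inner_conj_symm, RCLike.conj_mul, RCLike.ofReal_pow]

theorem star_dotProduct_self_eq_norm_sq (v : n → 𝕜) :
    star v ⬝ᵥ v = ((‖WithLp.toLp 2 v‖ ^ 2 : ℝ) : 𝕜) := by
  rw [dotProduct_comm, ← EuclideanSpace.inner_toLp_toLp, inner_self_eq_norm_sq_to_K,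
    RCLike.ofReal_pow]

variable [DecidableEq n]

theorem vecMulVec_self_star_le_smul_one (x : n → 𝕜) :
    vecMulVec x (star x) ≤ (‖WithLp.toLp 2 x‖ ^ 2) • (1 : Matrix n n 𝕜) := by
  refine Matrix.le_iff.mpr (.of_dotProduct_mulVec_nonneg ?_ fun v => ?_)
  · exact (isHermitian_one.smul (.all _)).sub (posSemidef_vecMulVec_self_star x).isHermitian
  have hcauchy : ‖inner 𝕜 (WithLp.toLp 2 x) (WithLp.toLp 2 v)‖ ^ 2 ≤
      ‖WithLp.toLp 2 x‖ ^ 2 * ‖WithLp.toLp 2 v‖ ^ 2 := by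
    rw [← mul_pow]
    gcongr
    exact norm_inner_le_norm _ _
  rw [sub_mulVec, smul_mulVec, one_mulVec, dotProduct_sub, dotProduct_smul,
    star_dotProduct_self_eq_norm_sq, star_dotProduct_vecMulVec_self_star_mulVec, sub_nonneg,
    RCLike.real_smul_ofReal, ← RCLike.ofReal_mul, RCLike.ofReal_le_ofReal]
  exact hcauchy

theorem eigenvalue_le_of_le_smul_one {A : Matrix n n 𝕜} {b : ℝ} (hA : A ≤ b • 1)
    {μ : 𝕜} {v : n → 𝕜} (hv : v ≠ 0) (hAv : A *ᵥ v = μ • v) : μ ≤ b := by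
  have hpos : 0 < star v ⬝ᵥ v := dotProduct_star_self_pos_iff.mpr hv
  have hquad : star v ⬝ᵥ ((b • 1 - A) *ᵥ v) = b * (star v ⬝ᵥ v) - μ * (star v ⬝ᵥ v) := by
    rw [sub_mulVec, smul_mulVec, one_mulVec, hAv, RCLike.real_smul_eq_coe_smul (K := 𝕜),
      dotProduct_sub, dotProduct_smul, dotProduct_smul, smul_eq_mul, smul_eq_mul]
  have hle : μ * (star v ⬝ᵥ v) ≤ b * (star v ⬝ᵥ v) :=
    sub_nonneg.mp (hquad ▸ (Matrix.le_iff.mp hA).dotProduct_mulVec_nonneg v)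
  exact le_of_mul_le_mul_right hle hpos

theorem det_le_pow_card_of_le_smul_one {A : Matrix n n 𝕜} {b : ℝ} (hA : A.PosSemidef)
    (hAb : A ≤ b • 1) : A.det ≤ (b : 𝕜) ^ Fintype.card n := by
  have hle (i : n) : (hA.isHermitian.eigenvalues i : 𝕜) ≤ b := by
    refine eigenvalue_le_of_le_smul_one hAb
      (v := (hA.isHermitian.eigenvectorBasis i).ofLp) ?_ ?_
    · simpa using hA.isHermitian.eigenvectorBasis.orthonormal.ne_zero i
    · rw [hA.isHermitian.mulVec_eigenvectorBasis, RCLike.real_smul_eq_coe_smul (K := 𝕜)]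
  calc A.det = ∏ i, (hA.isHermitian.eigenvalues i : 𝕜) := hA.isHermitian.det_eq_prod_eigenvalues
    _ ≤ ∏ _i : n, (b : 𝕜) :=
        prod_le_prod (fun i _ => RCLike.ofReal_nonneg.mpr (hA.eigenvalues_nonneg i))
          fun i _ => hle i
    _ = (b : 𝕜) ^ Fintype.card n := by rw [prod_const, card_univ]

theorem log_det_div_pow_card_le_of_le_smul_one {A : Matrix n n 𝕜} {a s : ℝ} (ha : 0 < a)
    (hA : A.PosDef) (hAs : A ≤ (s * a) • 1) :
    log (RCLike.re A.det / a ^ Fintype.card n) ≤ Fintype.card n * log s := by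
  have hpos : 0 < RCLike.re A.det := (RCLike.pos_iff.mp hA.det_pos).1
  have hle : RCLike.re A.det ≤ s ^ Fintype.card n * a ^ Fintype.card n := by
    have hdet := det_le_pow_card_of_le_smul_one hA.posSemidef hAs
    rw [← RCLike.ofReal_pow, mul_pow] at hdet
    simpa only [RCLike.ofReal_re] using (RCLike.le_iff_re_im.mp hdet).1
  rw [← log_pow]
  exact log_le_log (by positivity) ((div_le_iff₀ (by positivity)).mpr hle)

end ScalarBound

section RegularizedGram

variable {ι : Type*} [Fintype ι] [DecidableEq n]

/-- The regularized weighted Gram matrix `a I + ∑ c, N c x_c x_cᴴ`: the matrix `V` when `a = l²`.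
The scalars are real, so that it is Hermitian over any `𝕜`. -/
noncomputable def regularizedGram (a : ℝ) (N : ι → ℝ) (x : ι → n → 𝕜) : Matrix n n 𝕜 :=
  a • 1 + ∑ c, N c • vecMulVec (x c) (star (x c))

theorem regularizedGram_posDef [Finite n] {a : ℝ} (ha : 0 < a) {N : ι → ℝ} (hN : ∀ c, 0 ≤ N c)
    (x : ι → n → 𝕜) : (regularizedGram a N x).PosDef :=
  (PosDef.one.smul ha).add_posSemidef <|
    posSemidef_sum _ fun c _ => (posSemidef_vecMulVec_self_star (x c)).smul (hN c)

variable [Fintype n]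

theorem regularizedGram_le_smul_one (a : ℝ) {l t : ℝ} {N : ι → ℝ} (hN : ∀ c, 0 ≤ N c)
    (hNsum : ∑ c, N c ≤ t) {x : ι → n → 𝕜} (hx : ∀ c, ‖WithLp.toLp 2 (x c)‖ ≤ l) :
    regularizedGram a N x ≤ (a + t * l ^ 2) • 1 := by
  rw [regularizedGram, add_smul]
  gcongr
  calc ∑ c, N c • vecMulVec (x c) (star (x c))
      ≤ ∑ c, N c • l ^ 2 • (1 : Matrix n n 𝕜) := by
        gcongr with c
        · exact hN c
        · exact vecMulVec_self_star_le_smul_one (x c)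
            |>.trans (smul_le_smul_of_nonneg_right (by gcongr; exact hx c) zero_le_one)
    _ = ((∑ c, N c) * l ^ 2) • 1 := by rw [← sum_smul, smul_smul]
    _ ≤ (t * l ^ 2) • 1 := smul_le_smul_of_nonneg_right (by gcongr) zero_le_one

theorem stmt_7_general {l t : ℝ} (hl : 0 < l) {x : ι → n → 𝕜}
    (hx : ∀ c, ‖WithLp.toLp 2 (x c)‖ ≤ l) {N : ι → ℝ} (hN : ∀ c, 0 ≤ N c)
    (hNsum : ∑ c, N c ≤ t) :
    let V := regularizedGram (l ^ 2) N x
    (∀ (μ : 𝕜) (v : n → 𝕜), v ≠ 0 → V *ᵥ v = μ • v → μ ≤ ((t + 1) * l ^ 2 : ℝ)) ∧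
    V.det ≤ (((t + 1) * l ^ 2 : ℝ) : 𝕜) ^ Fintype.card n ∧
    log (RCLike.re V.det / l ^ (2 * Fintype.card n)) ≤ Fintype.card n * log (1 + t) := by
  intro V
  have hposDef : V.PosDef := regularizedGram_posDef (by positivity) hN x
  have hle : V ≤ ((t + 1) * l ^ 2) • 1 := by
    convert regularizedGram_le_smul_one (l ^ 2) hN hNsum hx using 2
    ring
  refine ⟨fun μ v => eigenvalue_le_of_le_smul_one hle,
    det_le_pow_card_of_le_smul_one hposDef.posSemidef hle, ?_⟩
  rw [pow_mul, add_comm 1 t]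
  exact log_det_div_pow_card_le_of_le_smul_one (by positivity) hposDef hle

end RegularizedGram

end Loewner

/-- With `‖x_c‖₂ ≤ l`, weights `N_c ≥ 0` summing to at most `t`, and
`V := l² I + Σ_c N_c x_c x_cᵀ`: every eigenvalue of `V` is at most `(t+1) l²`,
hence `det V ≤ ((t+1) l²)^d` and `log(det V / l^{2d}) ≤ d log(1+t)`. -/
theorem stmt_7 (d m : ℕ) (l t : ℝ) (hl : 0 < l) (ht : 0 ≤ t)
    (x : Fin m → Fin d → ℝ) (hx : ∀ c, Real.sqrt (∑ i, x c i ^ 2) ≤ l)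
    (N : Fin m → ℝ) (hN : ∀ c, 0 ≤ N c) (hNsum : ∑ c, N c ≤ t) :
    let V : Matrix (Fin d) (Fin d) ℝ :=
      l ^ 2 • (1 : Matrix (Fin d) (Fin d) ℝ) + ∑ c, N c • Matrix.vecMulVec (x c) (x c)
    (∀ (μ : ℝ) (v : Fin d → ℝ), v ≠ 0 → V *ᵥ v = μ • v → μ ≤ (t + 1) * l ^ 2) ∧
    (V.det ≤ ((t + 1) * l ^ 2) ^ d) ∧
    (Real.log (V.det / l ^ (2 * d)) ≤ d * Real.log (1 + t)) := by
  have hnorm (c : Fin m) : ‖WithLp.toLp 2 (x c)‖ ≤ l := by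
    simpa [EuclideanSpace.norm_eq] using hx c
  simpa [regularizedGram] using stmt_7_general hl hnorm hN hNsum
end

section
/- Let β̄ ∈ ℝ^m satisfy X β̄ = x and β̄_i = 0 whenever N_ii = 0. Then xᵀ V⁻¹ x ≤ Σ_{i : N_ii > 0} β̄_i² / N_ii. In particular, if there exists m₀ > 0 with N_ii ≥ m₀ for every i with β̄_i ≠ 0, then xᵀ V⁻¹ x ≤ ‖β̄‖₁² / m₀. (Variance-decay bound: the uncertainty of the optimal representation is dominated by any feasible representation.) -/
open Matrix Finset

/-!
For invertible `V`, the vector `y = V⁻¹ x` satisfies `xᵀ V⁻¹ x = 2 xᵀ y - yᵀ V y`, so any bound on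
the concave functional `y ↦ 2 xᵀ y - yᵀ V y` bounds `xᵀ V⁻¹ x`. If `x = X β`, `V = X N Xᵀ` and
`t = Xᵀ y`, the functional splits into the coordinates `2 βᵢ tᵢ - Nᵢ tᵢ²`, and each of these is at
most `βᵢ² / Nᵢ` by completing the square.
-/

theorem dotProduct_mul_diagonal_mul_transpose_mulVec {R ι κ : Type*} [CommSemiring R] [Fintype ι]
    [DecidableEq ι] [Fintype κ] (X : Matrix κ ι R) (w : ι → R) (y : κ → R) :
    y ⬝ᵥ (X * diagonal w * Xᵀ) *ᵥ y = ∑ i, w i * (Xᵀ *ᵥ y) i ^ 2 := by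
  rw [← mulVec_mulVec, ← mulVec_mulVec, ← dotProduct_transpose_mulVec]
  simp only [dotProduct, mulVec_diagonal, sq, mul_assoc]

theorem dotProduct_inv_mulVec_eq_two_mul_sub {R κ : Type*} [CommRing R] [Fintype κ]
    [DecidableEq κ] {V : Matrix κ κ R} (hV : IsUnit V) (x : κ → R) :
    x ⬝ᵥ V⁻¹ *ᵥ x = 2 * (x ⬝ᵥ V⁻¹ *ᵥ x) - V⁻¹ *ᵥ x ⬝ᵥ V *ᵥ (V⁻¹ *ᵥ x) := by
  have solves : V *ᵥ (V⁻¹ *ᵥ x) = x := by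
    rw [mulVec_mulVec, mul_nonsing_inv V ((isUnit_iff_isUnit_det V).mp hV), one_mulVec]
  rw [solves, dotProduct_comm (V⁻¹ *ᵥ x) x]
  ring

section LinearOrderedField

variable {K ι κ : Type*} [Field K] [LinearOrder K] [IsStrictOrderedRing K]

theorem two_mul_mul_sub_mul_sq_le_sq_div {b c : K} (hc : 0 ≤ c) (hb : c = 0 → b = 0) (t : K) :
    2 * (b * t) - c * t ^ 2 ≤ b ^ 2 / c := by
  rcases hc.eq_or_lt' with hc₀ | hc₀
  · simp [hb hc₀, hc₀]
  · rw [le_div_iff₀ hc₀]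
    linarith [sq_nonneg (b - c * t)]

theorem sum_sq_div_le_sq_sum_abs_div {s : Finset ι} {b w : ι → K} {c : K} (hc : 0 < c)
    (hw : ∀ i ∈ s, b i ≠ 0 → c ≤ w i) :
    ∑ i ∈ s, b i ^ 2 / w i ≤ (∑ i ∈ s, |b i|) ^ 2 / c := by
  calc ∑ i ∈ s, b i ^ 2 / w i
      ≤ ∑ i ∈ s, |b i| ^ 2 / c := by
        refine sum_le_sum fun i hi ↦ ?_
        rw [sq_abs]
        by_cases hbi : b i = 0
        · simp [hbi]
        · exact div_le_div_of_nonneg_left (sq_nonneg _) hc (hw i hi hbi)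
    _ = (∑ i ∈ s, |b i| ^ 2) / c := (sum_div ..).symm
    _ ≤ (∑ i ∈ s, |b i|) ^ 2 / c := by
        gcongr
        exact sum_sq_le_sq_sum_of_nonneg fun i _ ↦ abs_nonneg (b i)

variable [Fintype ι] [DecidableEq ι] [Fintype κ]

theorem two_mul_dotProduct_sub_le_sum_sq_div (X : Matrix κ ι K) {w β : ι → K}
    (hw : ∀ i, 0 ≤ w i) (hβ : ∀ i, w i = 0 → β i = 0) (y : κ → K) :
    2 * (X *ᵥ β ⬝ᵥ y) - y ⬝ᵥ (X * diagonal w * Xᵀ) *ᵥ y ≤ ∑ i, β i ^ 2 / w i := by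
  rw [dotProduct_comm, ← dotProduct_transpose_mulVec,
    dotProduct_mul_diagonal_mul_transpose_mulVec, dotProduct, mul_sum, ← sum_sub_distrib]
  exact sum_le_sum fun i _ ↦ two_mul_mul_sub_mul_sq_le_sq_div (hw i) (hβ i) _

variable [DecidableEq κ]

theorem dotProduct_inv_mulVec_le_sum_sq_div {X : Matrix κ ι K} {w β : ι → K}
    (hw : ∀ i, 0 ≤ w i) (hβ : ∀ i, w i = 0 → β i = 0) (hV : IsUnit (X * diagonal w * Xᵀ)) :
    X *ᵥ β ⬝ᵥ (X * diagonal w * Xᵀ)⁻¹ *ᵥ (X *ᵥ β) ≤ ∑ i, β i ^ 2 / w i := by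
  rw [dotProduct_inv_mulVec_eq_two_mul_sub hV]
  exact two_mul_dotProduct_sub_le_sum_sq_div X hw hβ _

theorem stmt_12_general (X : Matrix κ ι K) (N : ι → K) (hN : ∀ i, 0 ≤ N i)
    (hV : IsUnit (X * diagonal N * Xᵀ)) (x : κ → K) (β : ι → K) (hfeas : X *ᵥ β = x)
    (hsupp : ∀ i, N i = 0 → β i = 0) :
    x ⬝ᵥ (X * diagonal N * Xᵀ)⁻¹ *ᵥ x ≤ ∑ i with 0 < N i, β i ^ 2 / N i ∧
    ∀ m₀ : K, 0 < m₀ → (∀ i, β i ≠ 0 → m₀ ≤ N i) →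
      x ⬝ᵥ (X * diagonal N * Xᵀ)⁻¹ *ᵥ x ≤ (∑ i, |β i|) ^ 2 / m₀ := by
  subst hfeas
  have bound := dotProduct_inv_mulVec_le_sum_sq_div hN hsupp hV
  have sum_positive : ∑ i with 0 < N i, β i ^ 2 / N i = ∑ i, β i ^ 2 / N i :=
    sum_filter_of_ne fun i _ hi ↦ (hN i).lt_of_ne' (div_ne_zero_iff.mp hi).2
  exact ⟨bound.trans_eq sum_positive.symm, fun m₀ hm₀ hle ↦
    bound.trans (sum_sq_div_le_sq_sum_abs_div hm₀ fun i _ ↦ hle i)⟩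

end LinearOrderedField

/-- Variance-decay bound: if `X β̄ = x` with `β̄ᵢ = 0` whenever `Nᵢᵢ = 0`, then
`xᵀ V⁻¹ x ≤ Σ_{i : Nᵢᵢ>0} β̄ᵢ²/Nᵢᵢ`; in particular if `Nᵢᵢ ≥ m₀ > 0` for all `i` with
`β̄ᵢ ≠ 0`, then `xᵀ V⁻¹ x ≤ ‖β̄‖₁² / m₀`.  Here `V := X N Xᵀ` is positive definite and
`N` is diagonal with nonnegative entries. -/
theorem stmt_12 (d m : ℕ) (X : Matrix (Fin d) (Fin m) ℝ) (N : Fin m → ℝ)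
    (hN : ∀ i, 0 ≤ N i)
    (hV : (X * Matrix.diagonal N * Xᵀ).PosDef) (x : Fin d → ℝ)
    (βbar : Fin m → ℝ) (hfeas : X *ᵥ βbar = x) (hsupp : ∀ i, N i = 0 → βbar i = 0) :
    let V : Matrix (Fin d) (Fin d) ℝ := X * Matrix.diagonal N * Xᵀ
    (x ⬝ᵥ (V⁻¹ *ᵥ x) ≤ ∑ i ∈ Finset.univ.filter (fun i => 0 < N i), βbar i ^ 2 / N i) ∧
    (∀ m₀ : ℝ, 0 < m₀ → (∀ i, βbar i ≠ 0 → m₀ ≤ N i) →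
      x ⬝ᵥ (V⁻¹ *ᵥ x) ≤ (∑ i, |βbar i|) ^ 2 / m₀) :=
  stmt_12_general X N hN hV.isUnit x βbar hfeas hsupp
end

section
/- Let l, s ≥ 0 be reals and d ≥ 1 an integer, and let t be a real number with t ≥ 3 and t ≥ exp( 12 l² s² / (2 + d) ). Then l·s + √( (2 + d) · log( 1 + t (log t)² ) ) ≤ √( 3 (2 + d) · log t ). (Bound α_t ≤ √(3(2+d) log t) on the LinUCB-d confidence width α_t = l s + √((2+d) log f(t)) with f(t) = 1 + t log² t.) -/
open Real

/-!
The bound `x ≤ sinh x` at `x = log √t` gives `t log² t ≤ (t - 1)²`, so `1 + t log² t ≤ t²` and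
`log (1 + t log² t) ≤ 2 log t` for `t ≥ 1`. With `A = (2 + d) log t`, the width is thus at most
`√(A / 12) + √(2 A)`, and `√(1 / 12) + √2 < √3`.
-/

lemma sq_le_sinh_sq (x : ℝ) : x ^ 2 ≤ sinh x ^ 2 := by
  rw [sq_le_sq, abs_sinh, self_le_sinh_iff]
  exact abs_nonneg x

lemma mul_log_sq_le_sub_one_sq {t : ℝ} (ht : 0 < t) : t * log t ^ 2 ≤ (t - 1) ^ 2 := by
  have hsqrt : 0 < √t := sqrt_pos.2 ht
  have hsq : √t ^ 2 = t := sq_sqrt ht.le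
  have hlog : log t = 2 * log √t := by rw [log_sqrt ht.le]; ring
  calc t * log t ^ 2 = 4 * √t ^ 2 * log √t ^ 2 := by rw [hlog, hsq]; ring
    _ ≤ 4 * √t ^ 2 * sinh (log √t) ^ 2 :=
        mul_le_mul_of_nonneg_left (sq_le_sinh_sq _) (by positivity)
    _ = (√t ^ 2 - 1) ^ 2 := by rw [sinh_log hsqrt]; field_simp; ring
    _ = (t - 1) ^ 2 := by rw [hsq]

lemma log_one_add_mul_log_sq_le {t : ℝ} (ht : 1 ≤ t) :
    log (1 + t * log t ^ 2) ≤ 2 * log t := by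
  have hle : 1 + t * log t ^ 2 ≤ t ^ 2 := by
    linarith [mul_log_sq_le_sub_one_sq (zero_lt_one.trans_le ht)]
  calc log (1 + t * log t ^ 2) ≤ log (t ^ 2) := log_le_log (by positivity) hle
    _ = 2 * log t := by rw [log_pow, Nat.cast_ofNat]

lemma add_le_sqrt_weighted_sq_add_sq {c : ℝ} (hc : 0 < c) (x y : ℝ) :
    x + y ≤ √((1 + c) * x ^ 2 + (1 + c⁻¹) * y ^ 2) := by
  refine le_sqrt_of_sq_le (sub_nonneg.1 ?_)
  calc 0 ≤ (c * x - y) ^ 2 / c := by positivity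
    _ = (1 + c) * x ^ 2 + (1 + c⁻¹) * y ^ 2 - (x + y) ^ 2 := by field_simp; ring

theorem stmt_15_general {b K t : ℝ} (hK : 0 < K) (ht : exp (12 * b ^ 2 / K) ≤ t) :
    b + √(K * log (1 + t * log t ^ 2)) ≤ √(3 * K * log t) := by
  have ht_one : 1 ≤ t := (one_le_exp (by positivity)).trans ht
  have hlog : 0 ≤ log t := log_nonneg ht_one
  have hb : 12 * b ^ 2 ≤ log t * K :=
    (div_le_iff₀ hK).1 ((le_log_iff_exp_le (by positivity)).2 ht)
  -- The ratio of `√2` to `√(1 / 12)` is `√24`, close to the weight `5`.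
  calc b + √(K * log (1 + t * log t ^ 2)) ≤ b + √(K * (2 * log t)) := by
        gcongr; exact log_one_add_mul_log_sq_le ht_one
    _ ≤ √((1 + 5) * b ^ 2 + (1 + 5⁻¹) * √(K * (2 * log t)) ^ 2) :=
        add_le_sqrt_weighted_sq_add_sq (by norm_num) _ _
    _ ≤ √(3 * K * log t) := by
        rw [sq_sqrt (by positivity)]
        gcongr
        linarith [mul_nonneg hK.le hlog]

/-- Bound `α_t ≤ √(3(2+d) log t)` for the LinUCB-d confidence width
`α_t = l·s + √((2+d) log f(t))` with `f(t) = 1 + t log² t`, valid whenever `t ≥ 3`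
and `t ≥ exp(12 l² s² / (2+d))`. -/
theorem stmt_15 (l s : ℝ) (hl : 0 ≤ l) (hs : 0 ≤ s) (d : ℕ) (hd : 1 ≤ d)
    (t : ℝ) (ht3 : 3 ≤ t) (ht : Real.exp (12 * l ^ 2 * s ^ 2 / (2 + d)) ≤ t) :
    l * s + Real.sqrt ((2 + d) * Real.log (1 + t * Real.log t ^ 2))
      ≤ Real.sqrt (3 * (2 + d) * Real.log t) :=
  stmt_15_general (by positivity) (by rwa [mul_pow, ← mul_assoc])
end
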